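/- arXiv:2212.01919 — 3 statements merged into one kernel-verified Lean document; each statement's English description precedes it below -/
import Mathlib

section
/- Let X ⊆ (ℂ^n,0) be a germ of an analytic variety and f ∈ m a holomorphic function germ. If the pair (f, X) is relatively quasihomogeneous with respect to some weights w ∈ ℚ_+^n, then f ∈ df(Θ_X); in particular, if μ_X(f) < ∞, then μ_X(f) = τ_X(f). -/
open Filter Topology Polynomial

set_option maxHeartbeats 1000000
set_option synthInstance.maxHeartbeats 1000000

noncomputable section

/-- The algebra structure on germs of complex valued functions. -/
instance Filter.Germ.instAlgebraComplex {α : Type*} (l : Filter α) :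
    Algebra ℂ (Filter.Germ l ℂ) where
  algebraMap := (Filter.Germ.coeRingHom l).comp (algebraMap ℂ (α → ℂ))
  commutes' := fun c g => mul_comm _ _
  smul_def' := fun c g => Filter.Germ.inductionOn g fun f => rfl

/-- The local algebra `𝒪ₙ` of germs at `0 ∈ ℂⁿ` of holomorphic functions,
realized as the subalgebra of germs at `0` admitting an analytic representative. -/
def On (n : ℕ) : Subalgebra ℂ (Filter.Germ (𝓝 (0 : Fin n → ℂ)) ℂ) where
  carrier := {g | ∃ f : (Fin n → ℂ) → ℂ,
    AnalyticAt ℂ f 0 ∧ (f : Filter.Germ (𝓝 (0 : Fin n → ℂ)) ℂ) = g}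
  mul_mem' := by
    rintro a b ⟨f, hf, rfl⟩ ⟨g, hg, rfl⟩
    exact ⟨f * g, hf.mul hg, rfl⟩
  add_mem' := by
    rintro a b ⟨f, hf, rfl⟩ ⟨g, hg, rfl⟩
    exact ⟨f + g, hf.add hg, rfl⟩
  algebraMap_mem' := fun c => ⟨fun _ => c, analyticAt_const, rfl⟩

variable {n : ℕ}

/-- Existence of an analytic representative for an element of `𝒪ₙ`. -/
lemma On.exists_rep (g : On n) : ∃ f : (Fin n → ℂ) → ℂ,
    AnalyticAt ℂ f 0 ∧ (f : Filter.Germ (𝓝 (0 : Fin n → ℂ)) ℂ) = (g : Filter.Germ _ ℂ) :=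
  g.2

/-- A chosen analytic representative of a germ in `𝒪ₙ`. -/
def On.rep (g : On n) : (Fin n → ℂ) → ℂ := (On.exists_rep g).choose

lemma On.rep_analyticAt (g : On n) : AnalyticAt ℂ (On.rep g) 0 :=
  (On.exists_rep g).choose_spec.1

lemma On.rep_spec (g : On n) :
    (On.rep g : Filter.Germ (𝓝 (0 : Fin n → ℂ)) ℂ) = (g : Filter.Germ _ ℂ) :=
  (On.exists_rep g).choose_spec.2

/-- Build an element of `𝒪ₙ` from an analytic function. -/
def mkOn {n : ℕ} (f : (Fin n → ℂ) → ℂ) (hf : AnalyticAt ℂ f 0) : On n :=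
  ⟨(f : Filter.Germ (𝓝 (0 : Fin n → ℂ)) ℂ), ⟨f, hf, rfl⟩⟩

/-- The `i`-th partial derivative, as an operation on `𝒪ₙ`. -/
def pd (i : Fin n) (g : On n) : On n :=
  mkOn (fun x => fderiv ℂ (On.rep g) x (Pi.single i 1)) (by
    have h := ((ContinuousLinearMap.apply ℂ ℂ (Pi.single i 1)).analyticAt
      (fderiv ℂ (On.rep g) 0)).comp (On.rep_analyticAt g).fderiv
    exact h)

/-- Restriction of germs at `0` to germs along a finer filter. -/
def restrictGerm {l : Filter (Fin n → ℂ)} (hl : l ≤ 𝓝 (0 : Fin n → ℂ)) :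
    Filter.Germ (𝓝 (0 : Fin n → ℂ)) ℂ →+* Filter.Germ l ℂ where
  toFun g := g.compTendsto id (Filter.tendsto_id'.2 hl)
  map_one' := rfl
  map_mul' a b := Filter.Germ.inductionOn₂ a b fun f g => rfl
  map_zero' := rfl
  map_add' a b := Filter.Germ.inductionOn₂ a b fun f g => rfl

/-- Evaluation of germs restricted along `l ≤ 𝓝 0`, as a ring homomorphism on `𝒪ₙ`. -/
def restrictOn (n : ℕ) {l : Filter (Fin n → ℂ)} (hl : l ≤ 𝓝 (0 : Fin n → ℂ)) :
    On n →+* Filter.Germ l ℂ :=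
  (restrictGerm hl).comp (On n).val.toRingHom

/-- The ideal `I_X ⊆ 𝒪ₙ` of germs vanishing on a set `X` near `0`. -/
def IX (n : ℕ) (X : Set (Fin n → ℂ)) : Ideal (On n) :=
  RingHom.ker (restrictOn n (nhdsWithin_le_nhds (s := X)))

/-- The maximal ideal `𝔪 ⊂ 𝒪ₙ` of germs vanishing at the origin. -/
def mId (n : ℕ) : Ideal (On n) :=
  RingHom.ker (restrictOn n (pure_le_nhds (0 : Fin n → ℂ)))

/-- `X` is the germ at `0` of an analytic variety: `0 ∈ X` and, near `0`, `X` coincides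
with the common zero locus of finitely many holomorphic functions. -/
def IsAnalyticGermAt0 (n : ℕ) (X : Set (Fin n → ℂ)) : Prop :=
  (0 : Fin n → ℂ) ∈ X ∧
    ∃ (m : ℕ) (g : Fin m → (Fin n → ℂ) → ℂ),
      (∀ j, AnalyticAt ℂ (g j) 0) ∧
      ∀ᶠ x in 𝓝 (0 : Fin n → ℂ), (x ∈ X ↔ ∀ j, g j x = 0)

/-- The action `δ(g) = Σ δᵢ ∂g/∂xᵢ` of a vector field `δ ∈ Θ ≅ 𝒪ₙⁿ` on `g ∈ 𝒪ₙ`. -/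
def applyVF (δ : Fin n → On n) (g : On n) : On n := ∑ i, δ i * pd i g

lemma applyVF_add (a b : Fin n → On n) (g : On n) :
    applyVF (a + b) g = applyVF a g + applyVF b g := by
  simp [applyVF, add_mul, Finset.sum_add_distrib]

lemma applyVF_smul (c : On n) (a : Fin n → On n) (g : On n) :
    applyVF (c • a) g = c * applyVF a g := by
  simp [applyVF, Finset.mul_sum, smul_eq_mul, mul_assoc]

/-- For fixed `f`, the map `δ ↦ δ(f)` as an `𝒪ₙ`-linear map `Θ → 𝒪ₙ`. -/
def gradMap (n : ℕ) (f : On n) : (Fin n → On n) →ₗ[On n] On n where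
  toFun δ := applyVF δ f
  map_add' a b := applyVF_add a b f
  map_smul' c a := applyVF_smul c a f

/-- The module `Θ_X` of logarithmic vector fields of `X`, i.e. vector fields
preserving the ideal `I_X`. -/
def ThetaX (n : ℕ) (X : Set (Fin n → ℂ)) : Submodule (On n) (Fin n → On n) where
  carrier := {δ | ∀ g ∈ IX n X, applyVF δ g ∈ IX n X}
  add_mem' := by
    intro a b ha hb g hg
    rw [applyVF_add]
    exact Ideal.add_mem _ (ha g hg) (hb g hg)
  zero_mem' := by
    intro g hg
    have h0 : applyVF (0 : Fin n → On n) g = 0 := by simp [applyVF]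
    rw [h0]; exact Ideal.zero_mem _
  smul_mem' := by
    intro c a ha g hg
    rw [applyVF_smul]
    exact Ideal.mul_mem_left _ _ (ha g hg)

/-- The module `Θ_Y` of vector fields tangent to the hypersurface `Y = f⁻¹(0)`,
i.e. `δ(f) ∈ ⟨f⟩`. -/
def ThetaF (n : ℕ) (f : On n) : Submodule (On n) (Fin n → On n) :=
  Submodule.comap (gradMap n f) (Ideal.span {f})

/-- The module `H_Y` of Hamiltonian vector fields of `f`, i.e. `δ(f) = 0`. -/
def HamF (n : ℕ) (f : On n) : Submodule (On n) (Fin n → On n) :=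
  LinearMap.ker (gradMap n f)

/-- The Bruce–Roberts ideal `df(Θ_X) ⊆ 𝒪ₙ`. -/
def BRIdeal (n : ℕ) (X : Set (Fin n → ℂ)) (f : On n) : Ideal (On n) :=
  Submodule.map (gradMap n f) (ThetaX n X)

/-- The Jacobian ideal `J(f) = ⟨∂f/∂x₁, …, ∂f/∂xₙ⟩`. -/
def Jac (n : ℕ) (f : On n) : Ideal (On n) :=
  Ideal.span (Set.range fun i => pd i f)

/-- The ideal `J(f,h)` generated by the `2×2` minors of the Jacobian matrix of `(f,h)`. -/
def Jmin (n : ℕ) (f h : On n) : Ideal (On n) :=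
  Ideal.span (Set.range fun p : Fin n × Fin n => pd p.1 f * pd p.2 h - pd p.2 f * pd p.1 h)

/-- The Milnor number `μ(f)`. -/
def mu (n : ℕ) (f : On n) : ℕ := Module.finrank ℂ (On n ⧸ Jac n f)

/-- The Tjurina number `τ(f)`. -/
def tau (n : ℕ) (f : On n) : ℕ :=
  Module.finrank ℂ (On n ⧸ (Jac n f + Ideal.span {f}))

/-- The Bruce–Roberts Milnor number `μ_X(f)`. -/
def muX (n : ℕ) (X : Set (Fin n → ℂ)) (f : On n) : ℕ :=
  Module.finrank ℂ (On n ⧸ BRIdeal n X f)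

/-- The Bruce–Roberts Tjurina number `τ_X(f)`. -/
def tauX (n : ℕ) (X : Set (Fin n → ℂ)) (f : On n) : ℕ :=
  Module.finrank ℂ (On n ⧸ (BRIdeal n X f + Ideal.span {f}))

/-- The value at the origin of a germ in `𝒪ₙ`. -/
def ev0 (g : On n) : ℂ := On.rep g 0

/-- The linear part `j¹δ` of a vector field `δ`, as the matrix `(∂δⱼ/∂xᵢ)(0)`. -/
def linPart (δ : Fin n → On n) : Matrix (Fin n) (Fin n) ℂ :=
  Matrix.of fun i j => ev0 (pd i (δ j))

/-- The eigenvalues (with multiplicities) of the linear part of `δ` are given by `w`. -/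
def EigsEq (δ : Fin n → On n) (w : Fin n → ℚ) : Prop :=
  (linPart δ).charpoly = ∏ i, (Polynomial.X - Polynomial.C ((w i : ℂ)))

/-- The germ at `0` of the coordinate function `xᵢ`. -/
def coordG (i : Fin n) : On n :=
  mkOn (fun x : Fin n → ℂ => x i)
    ((ContinuousLinearMap.proj (R := ℂ) (φ := fun _ : Fin n => ℂ) i).analyticAt _)

/-- `g` is quasihomogeneous of degree `d` with respect to the weights `w` (in the given
coordinates): the Euler identity `Σ wᵢ xᵢ ∂g/∂xᵢ = d g` holds. -/
def IsQH (n : ℕ) (w : Fin n → ℚ) (d : ℚ) (g : On n) : Prop :=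
  ∑ i, (w i : ℂ) • (coordG i * pd i g) = (d : ℂ) • g

/-- A germ of a biholomorphic change of coordinates at `0 ∈ ℂⁿ`. -/
structure CoordChange (n : ℕ) where
  toFun : (Fin n → ℂ) → (Fin n → ℂ)
  invFun : (Fin n → ℂ) → (Fin n → ℂ)
  analyticAt : AnalyticAt ℂ toFun 0
  inv_analyticAt : AnalyticAt ℂ invFun 0
  map_zero : toFun 0 = 0
  inv_map_zero : invFun 0 = 0
  left_inv : ∀ᶠ x in 𝓝 (0 : Fin n → ℂ), invFun (toFun x) = x
  right_inv : ∀ᶠ x in 𝓝 (0 : Fin n → ℂ), toFun (invFun x) = x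

lemma CoordChange.tendsto (φ : CoordChange n) :
    Filter.Tendsto φ.toFun (𝓝 (0 : Fin n → ℂ)) (𝓝 (0 : Fin n → ℂ)) := by
  have h := φ.analyticAt.continuousAt
  rwa [ContinuousAt, φ.map_zero] at h

/-- The pullback (composition) of a germ `g ∈ 𝒪ₙ` under a change of coordinates. -/
def pullback (φ : CoordChange n) (g : On n) : On n :=
  ⟨(g : Filter.Germ (𝓝 (0 : Fin n → ℂ)) ℂ).compTendsto φ.toFun φ.tendsto, by
    refine ⟨On.rep g ∘ φ.toFun, ?_, ?_⟩
    · have h := On.rep_analyticAt g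
      rw [← φ.map_zero] at h
      exact h.comp φ.analyticAt
    · rw [← On.rep_spec g]
      exact (Filter.Germ.coe_compTendsto _ φ.tendsto).symm⟩

/-- Definition 1.1: the pair `(f, X)` is relatively quasihomogeneous with respect to the
weights `w`: in suitable coordinates, `f` is quasihomogeneous of degree `1` and `I_X` admits
a system of quasihomogeneous generators of positive degrees, all with respect to `w`. -/
def RelQH (n : ℕ) (X : Set (Fin n → ℂ)) (f : On n) (w : Fin n → ℚ) : Prop :=
  ∃ φ : CoordChange n,
    IsQH n w 1 (pullback φ f) ∧
    ∃ (m : ℕ) (h : Fin m → On n) (d : Fin m → ℚ),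
      Ideal.span (Set.range h) = IX n X ∧ (∀ j, 0 < d j) ∧
      ∀ j, IsQH n w (d j) (pullback φ (h j))

/-- The variety `X` is quasihomogeneous with respect to the weights `w`: in suitable
coordinates, `I_X` admits a system of quasihomogeneous generators of positive degrees. -/
def VarQH (n : ℕ) (X : Set (Fin n → ℂ)) (w : Fin n → ℚ) : Prop :=
  ∃ φ : CoordChange n,
    ∃ (m : ℕ) (h : Fin m → On n) (d : Fin m → ℚ),
      Ideal.span (Set.range h) = IX n X ∧ (∀ j, 0 < d j) ∧
      ∀ j, IsQH n w (d j) (pullback φ (h j))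

instance (f : On n) : HasQuotient (↥(ThetaF n f)) (Submodule ↥(On n) ↥(ThetaF n f)) :=
  Submodule.hasQuotient (R := On n) (M := ThetaF n f)

/-! Let `φ` be coordinates in which `f` and the generators of `I_X` satisfy Euler identities, and
let `δ` be the vector field that reads `∑ wᵢ xᵢ ∂/∂xᵢ` in these coordinates. Then `δ` multiplies
each generator of `I_X` by a scalar, so by the Leibniz rule it preserves `I_X`, that is, `δ ∈ Θ_X`;
and `f = δ(f)`, so that `f ∈ df(Θ_X)`. -/

lemma derivation_mem_ideal_span {R A : Type*} [CommSemiring R] [CommSemiring A] [Algebra R A]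
    (D : Derivation R A A) {S : Set A} (hS : ∀ s ∈ S, D s ∈ Ideal.span S) {a : A}
    (ha : a ∈ Ideal.span S) : D a ∈ Ideal.span S := by
  induction ha using Submodule.span_induction with
  | mem s hs => exact hS s hs
  | zero => simp only [map_zero, zero_mem]
  | add a b _ _ hDa hDb => simpa only [map_add] using add_mem hDa hDb
  | smul c a ha hDa =>
    rw [smul_eq_mul, D.leibniz]
    exact add_mem (Ideal.mul_mem_left _ c hDa) (Ideal.mul_mem_right _ _ ha)

lemma analyticAt_fderiv_apply {𝕜 E F : Type*} [NontriviallyNormedField 𝕜]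
    [NormedAddCommGroup E] [NormedSpace 𝕜 E] [NormedAddCommGroup F] [NormedSpace 𝕜 F]
    [CompleteSpace F] {f : E → F} {x : E} (hf : AnalyticAt 𝕜 f x) (v : E) :
    AnalyticAt 𝕜 (fun y => fderiv 𝕜 f y v) x :=
  ((ContinuousLinearMap.apply 𝕜 F v).analyticAt _).comp hf.fderiv

lemma exists_mkOn_eq (g : On n) : ∃ f hf, mkOn f hf = g :=
  ⟨On.rep g, On.rep_analyticAt g, Subtype.ext (On.rep_spec g)⟩

lemma mkOn_eq_mkOn_iff {f g : (Fin n → ℂ) → ℂ} {hf : AnalyticAt ℂ f 0} {hg : AnalyticAt ℂ g 0} :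
    mkOn f hf = mkOn g hg ↔ f =ᶠ[𝓝 0] g :=
  Subtype.ext_iff.trans Germ.coe_eq

lemma rep_mkOn_eventuallyEq {f : (Fin n → ℂ) → ℂ} (hf : AnalyticAt ℂ f 0) :
    On.rep (mkOn f hf) =ᶠ[𝓝 0] f :=
  Germ.coe_eq.1 (On.rep_spec (mkOn f hf))

lemma add_mkOn {f g : (Fin n → ℂ) → ℂ} (hf : AnalyticAt ℂ f 0) (hg : AnalyticAt ℂ g 0) :
    mkOn f hf + mkOn g hg = mkOn (f + g) (hf.add hg) :=
  rfl

lemma mul_mkOn {f g : (Fin n → ℂ) → ℂ} (hf : AnalyticAt ℂ f 0) (hg : AnalyticAt ℂ g 0) :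
    mkOn f hf * mkOn g hg = mkOn (f * g) (hf.mul hg) :=
  rfl

lemma smul_mkOn (c : ℂ) {f : (Fin n → ℂ) → ℂ} (hf : AnalyticAt ℂ f 0) :
    c • mkOn f hf = mkOn (c • f) (analyticAt_const.smul hf) :=
  rfl

lemma sum_mkOn {ι : Type*} (s : Finset ι) {f : ι → (Fin n → ℂ) → ℂ}
    (hf : ∀ i, AnalyticAt ℂ (f i) 0) :
    ∑ i ∈ s, mkOn (f i) (hf i) = mkOn (∑ i ∈ s, f i) (s.analyticAt_sum fun i _ => hf i) := by
  apply Subtype.ext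
  change (On n).val (∑ i ∈ s, mkOn (f i) (hf i)) = Germ.coeRingHom (𝓝 0) (∑ i ∈ s, f i)
  rw [map_sum, map_sum]
  rfl

lemma pd_mkOn (i : Fin n) {f : (Fin n → ℂ) → ℂ} (hf : AnalyticAt ℂ f 0) :
    pd i (mkOn f hf) =
      mkOn (fun x => fderiv ℂ f x (Pi.single i 1)) (analyticAt_fderiv_apply hf _) := by
  refine mkOn_eq_mkOn_iff.2 ?_
  filter_upwards [(rep_mkOn_eventuallyEq hf).fderiv (𝕜 := ℂ)] with x hx
  rw [hx]

lemma pd_add (i : Fin n) (a b : On n) : pd i (a + b) = pd i a + pd i b := by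
  obtain ⟨f, hf, rfl⟩ := exists_mkOn_eq a
  obtain ⟨g, hg, rfl⟩ := exists_mkOn_eq b
  rw [add_mkOn, pd_mkOn, pd_mkOn, pd_mkOn, add_mkOn, mkOn_eq_mkOn_iff]
  filter_upwards [hf.eventually_analyticAt, hg.eventually_analyticAt] with x hfx hgx
  rw [fderiv_add hfx.differentiableAt hgx.differentiableAt]
  rfl

lemma pd_smul (i : Fin n) (c : ℂ) (a : On n) : pd i (c • a) = c • pd i a := by
  obtain ⟨f, hf, rfl⟩ := exists_mkOn_eq a
  rw [smul_mkOn, pd_mkOn, pd_mkOn, smul_mkOn, mkOn_eq_mkOn_iff]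
  filter_upwards [hf.eventually_analyticAt] with x hfx
  rw [fderiv_const_smul hfx.differentiableAt]
  rfl

lemma pd_mul (i : Fin n) (a b : On n) : pd i (a * b) = a * pd i b + b * pd i a := by
  obtain ⟨f, hf, rfl⟩ := exists_mkOn_eq a
  obtain ⟨g, hg, rfl⟩ := exists_mkOn_eq b
  rw [mul_mkOn, pd_mkOn, pd_mkOn, pd_mkOn, mul_mkOn, mul_mkOn, add_mkOn, mkOn_eq_mkOn_iff]
  filter_upwards [hf.eventually_analyticAt, hg.eventually_analyticAt] with x hfx hgx
  rw [fderiv_mul hfx.differentiableAt hgx.differentiableAt]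
  rfl

/-- The partial derivative `pd i` as a `ℂ`-derivation of `𝒪ₙ`. -/
def pdDerivation (i : Fin n) : Derivation ℂ (On n) (On n) :=
  Derivation.mk' { toFun := pd i, map_add' := pd_add i, map_smul' := pd_smul i } (pd_mul i)

/-- The vector field `δ ∈ Θ` as a `ℂ`-derivation of `𝒪ₙ`. -/
def vfDerivation (δ : Fin n → On n) : Derivation ℂ (On n) (On n) :=
  ∑ i, δ i • pdDerivation i

lemma vfDerivation_apply (δ : Fin n → On n) (g : On n) : vfDerivation δ g = applyVF δ g := by
  change Derivation.coeFnAddMonoidHom (∑ i, δ i • pdDerivation i) g = _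
  rw [map_sum, Finset.sum_apply]
  rfl

lemma mem_ThetaX_of_span_eq {X : Set (Fin n → ℂ)} {δ : Fin n → On n} {S : Set (On n)}
    (hS : Ideal.span S = IX n X) (hδ : ∀ s ∈ S, applyVF δ s ∈ IX n X) : δ ∈ ThetaX n X := by
  intro g hg
  rw [← hS] at hg hδ ⊢
  simp only [← vfDerivation_apply] at hδ ⊢
  exact derivation_mem_ideal_span _ hδ hg

/-- The inverse change of coordinates. -/
def CoordChange.symm (φ : CoordChange n) : CoordChange n where
  toFun := φ.invFun
  invFun := φ.toFun
  analyticAt := φ.inv_analyticAt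
  inv_analyticAt := φ.analyticAt
  map_zero := φ.inv_map_zero
  inv_map_zero := φ.map_zero
  left_inv := φ.right_inv
  right_inv := φ.left_inv

lemma CoordChange.analyticAt_comp (φ : CoordChange n) {f : (Fin n → ℂ) → ℂ}
    (hf : AnalyticAt ℂ f 0) : AnalyticAt ℂ (f ∘ φ.toFun) 0 :=
  AnalyticAt.comp (by rwa [φ.map_zero]) φ.analyticAt

lemma pullback_mkOn (φ : CoordChange n) {f : (Fin n → ℂ) → ℂ} (hf : AnalyticAt ℂ f 0) :
    pullback φ (mkOn f hf) = mkOn (f ∘ φ.toFun) (φ.analyticAt_comp hf) :=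
  rfl

lemma pullback_symm_pullback (φ : CoordChange n) (g : On n) :
    pullback φ.symm (pullback φ g) = g := by
  obtain ⟨f, hf, rfl⟩ := exists_mkOn_eq g
  rw [pullback_mkOn, pullback_mkOn]
  exact mkOn_eq_mkOn_iff.2 (φ.right_inv.mono fun _ hx => congrArg f hx)

/-- Pulling back germs along `φ`, as an automorphism of the `ℂ`-algebra `𝒪ₙ`. -/
def pullbackAlgEquiv (φ : CoordChange n) : On n ≃ₐ[ℂ] On n where
  toFun := pullback φ
  invFun := pullback φ.symm
  left_inv := pullback_symm_pullback φ
  right_inv := pullback_symm_pullback φ.symm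
  map_mul' a b := by
    obtain ⟨f, hf, rfl⟩ := exists_mkOn_eq a
    obtain ⟨g, hg, rfl⟩ := exists_mkOn_eq b
    rfl
  map_add' a b := by
    obtain ⟨f, hf, rfl⟩ := exists_mkOn_eq a
    obtain ⟨g, hg, rfl⟩ := exists_mkOn_eq b
    rfl
  commutes' _ := rfl

lemma pullback_coordG (φ : CoordChange n) (j : Fin n) :
    pullback φ (coordG j) =
      mkOn (fun x => φ.toFun x j) (analyticAt_pi_iff.1 φ.analyticAt j) :=
  rfl

lemma pd_pullback (φ : CoordChange n) (i : Fin n) (g : On n) :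
    pd i (pullback φ g) = ∑ j, pd i (pullback φ (coordG j)) * pullback φ (pd j g) := by
  obtain ⟨f, hf, rfl⟩ := exists_mkOn_eq g
  simp only [pullback_coordG, pd_mkOn, pullback_mkOn, mul_mkOn, sum_mkOn, mkOn_eq_mkOn_iff]
  filter_upwards [φ.tendsto.eventually hf.eventually_analyticAt,
    φ.analyticAt.eventually_analyticAt] with x hfx hφx
  rw [fderiv_comp x hfx.differentiableAt hφx.differentiableAt, ContinuousLinearMap.comp_apply,
    pi_eq_sum_univ' (fderiv ℂ φ.toFun x (Pi.single i 1)), map_sum, Finset.sum_apply]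
  refine Finset.sum_congr rfl fun j _ => ?_
  rw [map_smul, smul_eq_mul, Pi.mul_apply, fderiv_apply hφx.differentiableAt]
  rfl

/-- The pushforward `φ_* ξ` of a vector field `ξ` along `φ`. Its `j`-th component is its value on
the `j`-th coordinate function, namely `ξ(φⱼ) ∘ φ⁻¹`. -/
def pushforward (φ : CoordChange n) (ξ : Fin n → On n) (j : Fin n) : On n :=
  pullback φ.symm (applyVF ξ (pullback φ (coordG j)))

lemma pullback_applyVF_pushforward (φ : CoordChange n) (ξ : Fin n → On n) (g : On n) :
    pullback φ (applyVF (pushforward φ ξ) g) = applyVF ξ (pullback φ g) :=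
  calc pullback φ (applyVF (pushforward φ ξ) g)
      = ∑ j, pullback φ (pushforward φ ξ j) * pullback φ (pd j g) := by
        change pullbackAlgEquiv φ (∑ j, pushforward φ ξ j * pd j g) = _
        simp only [map_sum, map_mul]
        rfl
    _ = ∑ j, (∑ i, ξ i * pd i (pullback φ (coordG j))) * pullback φ (pd j g) :=
        Finset.sum_congr rfl fun j _ =>
          congrArg (· * pullback φ (pd j g)) (pullback_symm_pullback φ.symm _)
    _ = ∑ i, ξ i * ∑ j, pd i (pullback φ (coordG j)) * pullback φ (pd j g) := by
        simp only [Finset.sum_mul, Finset.mul_sum, mul_assoc]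
        exact Finset.sum_comm
    _ = applyVF ξ (pullback φ g) := by
        simp only [← pd_pullback]
        rfl

/-- The Euler vector field `∑ wᵢ xᵢ ∂/∂xᵢ` of the weights `w`. -/
def eulerField (w : Fin n → ℚ) (i : Fin n) : On n := (w i : ℂ) • coordG i

lemma isQH_iff_applyVF_eulerField {w : Fin n → ℚ} {d : ℚ} {g : On n} :
    IsQH n w d g ↔ applyVF (eulerField w) g = (d : ℂ) • g := by
  simp only [IsQH, applyVF, eulerField, smul_mul_assoc]

lemma IsQH.applyVF_pushforward_eulerField {φ : CoordChange n} {w : Fin n → ℚ} {d : ℚ} {g : On n}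
    (hg : IsQH n w d (pullback φ g)) :
    applyVF (pushforward φ (eulerField w)) g = (d : ℂ) • g := by
  apply (pullbackAlgEquiv φ).injective
  rw [map_smul]
  exact (pullback_applyVF_pushforward φ _ g).trans (isQH_iff_applyVF_eulerField.1 hg)

lemma muX_eq_tauX_of_mem_BRIdeal {X : Set (Fin n → ℂ)} {f : On n} (hf : f ∈ BRIdeal n X f) :
    muX n X f = tauX n X f := by
  have hspan : Ideal.span {f} ≤ BRIdeal n X f := (Ideal.span_singleton_le_iff_mem _).2 hf
  rw [muX, tauX, Submodule.add_eq_sup, sup_eq_left.2 hspan]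

theorem relQH_imp_mem_BRIdeal_general {X : Set (Fin n → ℂ)} {f : On n} {w : Fin n → ℚ}
    {φ : CoordChange n} {S : Set (On n)} (hf : IsQH n w 1 (pullback φ f))
    (hspan : Ideal.span S = IX n X) (hS : ∀ s ∈ S, ∃ d, IsQH n w d (pullback φ s)) :
    f ∈ BRIdeal n X f ∧
      (FiniteDimensional ℂ (On n ⧸ BRIdeal n X f) → muX n X f = tauX n X f) := by
  have hlog : pushforward φ (eulerField w) ∈ ThetaX n X := by
    refine mem_ThetaX_of_span_eq hspan fun s hs => ?_
    obtain ⟨d, hd⟩ := hS s hs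
    rw [hd.applyVF_pushforward_eulerField, ← hspan]
    exact Submodule.smul_of_tower_mem _ (d : ℂ) (Ideal.subset_span hs)
  have heuler : applyVF (pushforward φ (eulerField w)) f = f := by
    rw [hf.applyVF_pushforward_eulerField, Rat.cast_one, one_smul]
  have hmem : f ∈ BRIdeal n X f := ⟨_, hlog, heuler⟩
  exact ⟨hmem, fun _ => muX_eq_tauX_of_mem_BRIdeal hmem⟩

/-- If the pair `(f, X)` is relatively quasihomogeneous with respect to some positive
rational weights, then `f ∈ df(Θ_X)`; in particular, if `μ_X(f) < ∞` then
`μ_X(f) = τ_X(f)`. -/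
theorem relQH_imp_mem_BRIdeal (n : ℕ) (X : Set (Fin n → ℂ))
    (hX : IsAnalyticGermAt0 n X) (f : On n) (hf : f ∈ mId n)
    (w : Fin n → ℚ) (hw : ∀ i, 0 < w i) (hqh : RelQH n X f w) :
    f ∈ BRIdeal n X f ∧
      (FiniteDimensional ℂ (On n ⧸ BRIdeal n X f) → muX n X f = tauX n X f) := by
  obtain ⟨φ, hfφ, m, h, d, hspan, -, hhφ⟩ := hqh
  exact relQH_imp_mem_BRIdeal_general hfφ hspan (Set.forall_mem_range.2 fun j => ⟨d j, hhφ j⟩)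

end
end

section
/- Let X ⊆ (ℂ^n,0) be a germ of an analytic variety and f ∈ O_n with μ_X(f) < ∞, and set Y = f^{-1}(0). Then τ_X(f) = τ(f) + dim_ℂ Θ/(Θ_X + Θ_Y). -/
open Filter Topology Polynomial

set_option maxHeartbeats 1000000
set_option synthInstance.maxHeartbeats 1000000

noncomputable section

variable {n : ℕ}

/-!
The map `δ ↦ δ(f)` sends `Θ` onto `J(f)`. Since `Θ_X + Θ_Y` is the preimage of `df(Θ_X) + ⟨f⟩`
under it, there is a short exact sequence
`0 → Θ/(Θ_X + Θ_Y) → 𝒪ₙ/(df(Θ_X) + ⟨f⟩) → 𝒪ₙ/(J(f) + ⟨f⟩) → 0`, and the formula is the additivity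
of `dim_ℂ` along it.
-/

section LinearAlgebra

variable {K R M M' : Type*} [DivisionRing K] [Ring R] [SMul K R]
  [AddCommGroup M] [Module R M]
  [AddCommGroup M'] [Module R M'] [Module K M'] [IsScalarTower K R M']

theorem comap_map_sup (φ : M →ₗ[R] M') (N : Submodule R M) (I : Submodule R M') :
    (N.map φ ⊔ I).comap φ = N ⊔ I.comap φ :=
  calc (N.map φ ⊔ I).comap φ
      = (N.map (I.mkQ ∘ₗ φ)).comap (I.mkQ ∘ₗ φ) := by
        rw [Submodule.map_comp, Submodule.comap_comp, Submodule.comap_map_mkQ, sup_comm]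
    _ = N ⊔ I.comap φ := by
        rw [Submodule.comap_map_eq, LinearMap.ker_comp, Submodule.ker_mkQ]

theorem finiteDimensional_quotient_of_le {S T : Submodule R M'}
    [FiniteDimensional K (M' ⧸ S)] (h : S ≤ T) : FiniteDimensional K (M' ⧸ T) :=
  Module.Finite.of_surjective ((Submodule.factor h).restrictScalars K)
    (Submodule.factor_surjective h)

theorem finrank_eq_finrank_add_finrank_of_exact {V' V V'' : Type*}
    [AddCommGroup V'] [Module K V'] [AddCommGroup V] [Module K V] [FiniteDimensional K V]
    [AddCommGroup V''] [Module K V''] {ι : V' →ₗ[K] V} {π : V →ₗ[K] V''}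
    (hι : Function.Injective ι) (hπ : Function.Surjective π) (h : Function.Exact ι π) :
    Module.finrank K V = Module.finrank K V'' + Module.finrank K V' := by
  rw [← π.finrank_range_add_finrank_ker, LinearMap.range_eq_top.2 hπ, finrank_top,
    h.linearMap_ker_eq, LinearMap.finrank_range_of_inj hι]

theorem exact_mapQ_comap_factor (φ : M →ₗ[R] M') (S : Submodule R M') :
    Function.Exact ((S.comap φ).mapQ S φ le_rfl)
      (Submodule.factor (le_sup_right : S ≤ LinearMap.range φ ⊔ S)) := by
  rw [LinearMap.exact_iff, Submodule.factor, Submodule.ker_mapQ, Submodule.range_mapQ,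
    Submodule.comap_id, Submodule.map_sup, Submodule.mkQ_map_self, sup_bot_eq]

theorem finrank_quotient_eq_add_finrank_quotient_comap [Module K M] [IsScalarTower K R M]
    (φ : M →ₗ[R] M') (S : Submodule R M') [FiniteDimensional K (M' ⧸ S)] :
    Module.finrank K (M' ⧸ S) =
      Module.finrank K (M' ⧸ (LinearMap.range φ ⊔ S)) +
        Module.finrank K (M ⧸ S.comap φ) := by
  let ι : (M ⧸ S.comap φ) →ₗ[R] M' ⧸ S := (S.comap φ).mapQ S φ le_rfl
  let π : (M' ⧸ S) →ₗ[R] M' ⧸ (LinearMap.range φ ⊔ S) := Submodule.factor le_sup_right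
  have ι_injective : Function.Injective ι := by
    rw [← LinearMap.ker_eq_bot, Submodule.ker_mapQ, Submodule.mkQ_map_self]
  have π_surjective : Function.Surjective π := Submodule.factor_surjective le_sup_right
  exact finrank_eq_finrank_add_finrank_of_exact (ι := ι.restrictScalars K)
    (π := π.restrictScalars K) ι_injective π_surjective (exact_mapQ_comap_factor φ S)

end LinearAlgebra

theorem range_gradMap (n : ℕ) (f : On n) : LinearMap.range (gradMap n f) = Jac n f :=
  Fintype.range_linearCombination (On n) fun i => pd i f

theorem tauX_decomposition_general (n : ℕ) (X : Set (Fin n → ℂ)) (f : On n)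
    [FiniteDimensional ℂ (On n ⧸ (BRIdeal n X f + Ideal.span {f}))] :
    tauX n X f = tau n f +
      Module.finrank ℂ ((Fin n → On n) ⧸ (ThetaX n X ⊔ ThetaF n f)) := by
  have preimage : Submodule.comap (gradMap n f) (BRIdeal n X f + Ideal.span {f}) =
      ThetaX n X ⊔ ThetaF n f :=
    comap_map_sup (gradMap n f) (ThetaX n X) (Ideal.span {f})
  have image : LinearMap.range (gradMap n f) ⊔ (BRIdeal n X f + Ideal.span {f}) =
      Jac n f + Ideal.span {f} := by
    have BRIdeal_le : BRIdeal n X f ≤ LinearMap.range (gradMap n f) := LinearMap.map_le_range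
    rw [Submodule.add_eq_sup, ← sup_assoc, sup_eq_left.2 BRIdeal_le, range_gradMap,
      Submodule.add_eq_sup]
  have additivity := finrank_quotient_eq_add_finrank_quotient_comap (K := ℂ) (gradMap n f)
    (BRIdeal n X f + Ideal.span {f})
  rwa [image, preimage] at additivity

/-- Formula (3) of Proposition 2.1: `τ_X(f) = τ(f) + dim_ℂ Θ/(Θ_X + Θ_Y)`. -/
theorem tauX_decomposition (n : ℕ) (X : Set (Fin n → ℂ)) (hX : IsAnalyticGermAt0 n X)
    (f : On n) (hfin : FiniteDimensional ℂ (On n ⧸ BRIdeal n X f)) :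
    tauX n X f = tau n f +
      Module.finrank ℂ ((Fin n → On n) ⧸ (ThetaX n X ⊔ ThetaF n f)) :=
  have := finiteDimensional_quotient_of_le (K := ℂ)
    (le_sup_left : BRIdeal n X f ≤ BRIdeal n X f + Ideal.span {f})
  tauX_decomposition_general n X f

end
end

section
/- Let X ⊆ (ℂ^n,0) be a germ of an analytic variety and f ∈ O_n with μ_X(f) < ∞, and set Y = f^{-1}(0). Then μ_X(f) = τ_X(f) if and only if both μ(f) = τ(f) and Θ_Y = (Θ_X ∩ Θ_Y) + H_Y. -/
open Filter Topology Polynomial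

set_option maxHeartbeats 1000000
set_option synthInstance.maxHeartbeats 1000000

noncomputable section

variable {n : ℕ}

/-!
Write `df : Θ → 𝒪ₙ` for `δ ↦ δ(f)`; its image is `J(f)`, and the image of `Θ_X` is the
Bruce–Roberts ideal. An equality `μ = τ` or `μ_X = τ_X` between finite codimensions says that `f`
lies in the ideal concerned, so the claim is that `f ∈ df(Θ_X)` iff `f ∈ J(f)` and the splitting
of `Θ_Y` holds. As `Θ_Y = df⁻¹⟨f⟩` contains `H_Y = ker df`, the modular law turns the splitting
into `Θ_Y ≤ Θ_X + ker df`, which after applying `df` becomes `J(f) ∩ ⟨f⟩ ≤ df(Θ_X)`. Given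
`f ∈ J(f)`, that is `f ∈ df(Θ_X)`.
-/

section Modules

variable {A M P : Type*} [Ring A] [AddCommGroup M] [Module A M] [AddCommGroup P] [Module A P]

lemma comap_eq_inf_comap_sup_ker_iff (D : M →ₗ[A] P) (N : Submodule A M) (Q : Submodule A P) :
    Q.comap D = (N ⊓ Q.comap D) ⊔ LinearMap.ker D ↔ LinearMap.range D ⊓ Q ≤ N.map D := by
  have modular_law :
      (N ⊓ Q.comap D) ⊔ LinearMap.ker D = Q.comap D ⊓ (N ⊔ LinearMap.ker D) := by
    rw [inf_comm N, inf_sup_assoc_of_le N (LinearMap.ker_le_comap D)]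
  rw [modular_law, left_eq_inf, ← LinearMap.map_le_map_iff, Submodule.map_comap_eq]

lemma mem_map_iff_mem_range_and_comap_span_eq (D : M →ₗ[A] P) (N : Submodule A M) (f : P) :
    f ∈ N.map D ↔ f ∈ LinearMap.range D ∧
      (A ∙ f).comap D = (N ⊓ (A ∙ f).comap D) ⊔ LinearMap.ker D := by
  rw [comap_eq_inf_comap_sup_ker_iff]
  constructor
  · intro hf
    exact ⟨LinearMap.map_le_range hf,
      inf_le_right.trans ((Submodule.span_singleton_le_iff_mem f _).2 hf)⟩
  · rintro ⟨hf, hle⟩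
    exact hle ⟨hf, Submodule.mem_span_singleton_self f⟩

lemma finite_quotient_of_le (R : Type*) [Semiring R] [SMul R A] [Module R P] [IsScalarTower R A P]
    {Q Q' : Submodule A P} (hle : Q ≤ Q') [Module.Finite R (P ⧸ Q)] : Module.Finite R (P ⧸ Q') :=
  Module.Finite.of_surjective ((Submodule.factor hle).restrictScalars R)
    (Submodule.factor_surjective hle)

variable (K : Type*) [DivisionRing K] [SMul K A] [Module K P] [IsScalarTower K A P]

lemma finrank_quotient_eq_iff_of_le {Q Q' : Submodule A P} (hle : Q ≤ Q')
    [Module.Finite K (P ⧸ Q)] :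
    Module.finrank K (P ⧸ Q) = Module.finrank K (P ⧸ Q') ↔ Q = Q' := by
  refine ⟨fun hrank => hle.antisymm ?_, fun h => by rw [h]⟩
  have := finite_quotient_of_le K hle
  have factor_injective : Function.Injective (Submodule.factor hle) :=
    (LinearMap.injective_iff_surjective_of_finrank_eq_finrank
      (f := (Submodule.factor hle).restrictScalars K) hrank).2 (Submodule.factor_surjective hle)
  intro x hx
  rw [← Submodule.Quotient.mk_eq_zero] at hx ⊢
  exact factor_injective (hx.trans (map_zero _).symm)

lemma finrank_quotient_eq_finrank_quotient_sup_span_iff (Q : Submodule A P)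
    [Module.Finite K (P ⧸ Q)] (f : P) :
    Module.finrank K (P ⧸ Q) = Module.finrank K (P ⧸ (Q ⊔ A ∙ f)) ↔ f ∈ Q := by
  rw [finrank_quotient_eq_iff_of_le K le_sup_left, left_eq_sup, Submodule.span_singleton_le_iff_mem]

theorem muX_eq_tauX_iff_general (D : M →ₗ[A] P) (N : Submodule A M)
    (hfin : Module.Finite K (P ⧸ N.map D)) (f : P) :
    Module.finrank K (P ⧸ N.map D) = Module.finrank K (P ⧸ (N.map D ⊔ A ∙ f)) ↔
      Module.finrank K (P ⧸ LinearMap.range D) =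
          Module.finrank K (P ⧸ (LinearMap.range D ⊔ A ∙ f)) ∧
        (A ∙ f).comap D = (N ⊓ (A ∙ f).comap D) ⊔ LinearMap.ker D := by
  have : Module.Finite K (P ⧸ LinearMap.range D) :=
    finite_quotient_of_le K (LinearMap.map_le_range (p := N))
  simp only [finrank_quotient_eq_finrank_quotient_sup_span_iff]
  exact mem_map_iff_mem_range_and_comap_span_eq D N f

end Modules

lemma Jac_eq_range_gradMap (f : On n) : Jac n f = LinearMap.range (gradMap n f) :=
  (Fintype.range_linearCombination (On n) fun i => pd i f).symm

/-- Corollary 2.2: `μ_X(f) = τ_X(f)` iff `μ(f) = τ(f)` and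
`Θ_Y = (Θ_X ∩ Θ_Y) + H_Y`. -/
theorem muX_eq_tauX_iff (n : ℕ) (X : Set (Fin n → ℂ)) (hX : IsAnalyticGermAt0 n X)
    (f : On n) (hfin : FiniteDimensional ℂ (On n ⧸ BRIdeal n X f)) :
    muX n X f = tauX n X f ↔
      (mu n f = tau n f ∧ ThetaF n f = (ThetaX n X ⊓ ThetaF n f) ⊔ HamF n f) := by
  rw [mu, tau, Jac_eq_range_gradMap]
  exact muX_eq_tauX_iff_general ℂ (gradMap n f) (ThetaX n X) hfin f

end
end
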